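/- arXiv:math/0005054 — 3 statements merged into one kernel-verified Lean document; each statement's English description precedes it below -/
import Mathlib

section
/- Let 𝒜 be a collection of subsets of ℝⁿ and R > 0. If for every ε > 0 there exists a packing of 𝒜 into a closed ball of radius R + ε in ℝⁿ, then there exists a packing of 𝒜 into a closed ball of radius R. -/
/-!
The space of rigid motions that send a given point into a fixed bounded set is compact, so a
sequence of packings into balls of radius `R + 1/(k+1)` (all recentred at the origin) has a
limit position for each nonempty `A i`. Limits are taken along a fixed nonprincipal ultrafilter
on `ℕ`, which makes them exist for all `i` simultaneously, for an index set of any cardinality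
(`exists_limit_motion`).

The limit motions form a packing into the ball of radius `R`. Containment passes to the limit
since closed conditions do. For disjointness, rigid motions are homeomorphisms, so a common
interior point of two limit sets is `σᵢ x = σⱼ y` with `x`, `y` interior to `A i`, `A j`. Then
`σⱼₖ⁻¹ (σᵢₖ x) → y`, hence `σᵢₖ x` is a common interior point of the two sets in the `k`-th
packing for some `k`, a contradiction.
-/

open Pointwise

noncomputable section

/-- The rigid motion `(θ, ξ)` acting on a point of `ℝⁿ`: `x ↦ ξ + θx`. -/
def rmApply {n : ℕ} (θ : Matrix (Fin n) (Fin n) ℝ) (ξ : EuclideanSpace ℝ (Fin n))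
    (x : EuclideanSpace ℝ (Fin n)) : EuclideanSpace ℝ (Fin n) :=
  ξ + (EuclideanSpace.equiv (Fin n) ℝ).symm (θ.mulVec (EuclideanSpace.equiv (Fin n) ℝ x))

/-- `(θ, ξ)` is a packing of the family `A` into the set `C`: each `θ i` is orthogonal,
each repositioned set `σᵢ(Aᵢ)` is contained in `C`, and the repositioned sets have
pairwise disjoint interiors. -/
def IsPacking {n : ℕ} {ι : Type*} (A : ι → Set (EuclideanSpace ℝ (Fin n)))
    (θ : ι → Matrix (Fin n) (Fin n) ℝ) (ξ : ι → EuclideanSpace ℝ (Fin n))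
    (C : Set (EuclideanSpace ℝ (Fin n))) : Prop :=
  (∀ i, θ i ∈ Matrix.orthogonalGroup (Fin n) ℝ) ∧
  (∀ i, rmApply (θ i) (ξ i) '' A i ⊆ C) ∧
  Pairwise fun i j =>
    interior (rmApply (θ i) (ξ i) '' A i) ∩ interior (rmApply (θ j) (ξ j) '' A j) = ∅

/-- There exists a packing of `A` into `C`. -/
def PacksInto {n : ℕ} {ι : Type*} (A : ι → Set (EuclideanSpace ℝ (Fin n)))
    (C : Set (EuclideanSpace ℝ (Fin n))) : Prop :=
  ∃ θ ξ, IsPacking A θ ξ C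

open Filter Topology

/-- The inverse `z ↦ θᵀ(z - ξ)` of the rigid motion `x ↦ ξ + θx`, for orthogonal `θ`. -/
def rmInv {n : ℕ} (θ : Matrix (Fin n) (Fin n) ℝ) (ξ : EuclideanSpace ℝ (Fin n))
    (z : EuclideanSpace ℝ (Fin n)) : EuclideanSpace ℝ (Fin n) :=
  rmApply θ.transpose 0 (z - ξ)

lemma continuous_rmApply {n : ℕ} :
    Continuous fun p : Matrix (Fin n) (Fin n) ℝ × EuclideanSpace ℝ (Fin n) ×
      EuclideanSpace ℝ (Fin n) => rmApply p.1 p.2.1 p.2.2 := by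
  unfold rmApply
  refine continuous_snd.fst.add ((EuclideanSpace.equiv (Fin n) ℝ).symm.continuous.comp ?_)
  exact continuous_fst.matrix_mulVec
    ((EuclideanSpace.equiv (Fin n) ℝ).continuous.comp continuous_snd.snd)

lemma tendsto_rmApply {n : ℕ} {α : Type*} {l : Filter α} {θ : α → Matrix (Fin n) (Fin n) ℝ}
    {ξ x : α → EuclideanSpace ℝ (Fin n)} {θ' : Matrix (Fin n) (Fin n) ℝ}
    {ξ' x' : EuclideanSpace ℝ (Fin n)} (hθ : Tendsto θ l (𝓝 θ')) (hξ : Tendsto ξ l (𝓝 ξ'))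
    (hx : Tendsto x l (𝓝 x')) :
    Tendsto (fun k => rmApply (θ k) (ξ k) (x k)) l (𝓝 (rmApply θ' ξ' x')) :=
  (continuous_rmApply.tendsto (θ', ξ', x')).comp
    (hθ.prodMk_nhds (hξ.prodMk_nhds hx))

lemma tendsto_rmInv {n : ℕ} {α : Type*} {l : Filter α} {θ : α → Matrix (Fin n) (Fin n) ℝ}
    {ξ x : α → EuclideanSpace ℝ (Fin n)} {θ' : Matrix (Fin n) (Fin n) ℝ}
    {ξ' x' : EuclideanSpace ℝ (Fin n)} (hθ : Tendsto θ l (𝓝 θ')) (hξ : Tendsto ξ l (𝓝 ξ'))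
    (hx : Tendsto x l (𝓝 x')) :
    Tendsto (fun k => rmInv (θ k) (ξ k) (x k)) l (𝓝 (rmInv θ' ξ' x')) :=
  tendsto_rmApply ((continuous_id.matrix_transpose.tendsto θ').comp hθ) tendsto_const_nhds
    (hx.sub hξ)

lemma rmInv_rmApply {n : ℕ} {θ : Matrix (Fin n) (Fin n) ℝ}
    (hθ : θ ∈ Matrix.orthogonalGroup (Fin n) ℝ) (ξ x : EuclideanSpace ℝ (Fin n)) :
    rmInv θ ξ (rmApply θ ξ x) = x := by
  have h : θ.transpose * θ = 1 := (Matrix.mem_orthogonalGroup_iff' (Fin n) ℝ).1 hθ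
  simp only [rmInv, rmApply, zero_add, add_sub_cancel_left, ContinuousLinearEquiv.apply_symm_apply,
    Matrix.mulVec_mulVec, h, Matrix.one_mulVec, ContinuousLinearEquiv.symm_apply_apply]

lemma rmApply_rmInv {n : ℕ} {θ : Matrix (Fin n) (Fin n) ℝ}
    (hθ : θ ∈ Matrix.orthogonalGroup (Fin n) ℝ) (ξ x : EuclideanSpace ℝ (Fin n)) :
    rmApply θ ξ (rmInv θ ξ x) = x := by
  have h : θ * θ.transpose = 1 := (Matrix.mem_orthogonalGroup_iff (Fin n) ℝ).1 hθ
  simp only [rmInv, rmApply, zero_add, ContinuousLinearEquiv.apply_symm_apply,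
    Matrix.mulVec_mulVec, h, Matrix.one_mulVec, ContinuousLinearEquiv.symm_apply_apply,
    add_sub_cancel]

lemma interior_rmApply_image {n : ℕ} {θ : Matrix (Fin n) (Fin n) ℝ}
    (hθ : θ ∈ Matrix.orthogonalGroup (Fin n) ℝ) (ξ : EuclideanSpace ℝ (Fin n))
    (S : Set (EuclideanSpace ℝ (Fin n))) :
    interior (rmApply θ ξ '' S) = rmApply θ ξ '' interior S := by
  let e : EuclideanSpace ℝ (Fin n) ≃ₜ EuclideanSpace ℝ (Fin n) :=
    { toFun := rmApply θ ξ
      invFun := rmInv θ ξ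
      left_inv := rmInv_rmApply hθ ξ
      right_inv := rmApply_rmInv hθ ξ
      continuous_toFun := continuous_iff_continuousAt.2 fun _ =>
        tendsto_rmApply tendsto_const_nhds tendsto_const_nhds tendsto_id
      continuous_invFun := continuous_iff_continuousAt.2 fun _ =>
        tendsto_rmInv tendsto_const_nhds tendsto_const_nhds tendsto_id }
  exact (e.image_interior S).symm

lemma rmApply_sub {n : ℕ} (θ : Matrix (Fin n) (Fin n) ℝ) (ξ c x : EuclideanSpace ℝ (Fin n)) :
    rmApply θ (ξ - c) x = rmApply θ ξ x - c := by
  unfold rmApply; abel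

lemma isCompact_orthogonalGroup (n : ℕ) :
    IsCompact (Matrix.orthogonalGroup (Fin n) ℝ : Set (Matrix (Fin n) (Fin n) ℝ)) := by
  have hK : IsCompact (Set.univ.pi fun _ : Fin n => Set.univ.pi fun _ : Fin n =>
      Set.Icc (-1 : ℝ) 1) :=
    isCompact_univ_pi fun _ => isCompact_univ_pi fun _ => isCompact_Icc
  refine IsCompact.of_isClosed_subset hK ?_ ?_
  · have : (Matrix.orthogonalGroup (Fin n) ℝ : Set (Matrix (Fin n) (Fin n) ℝ))
        = {M | M * M.transpose = 1} := by
      ext M; exact Matrix.mem_orthogonalGroup_iff (Fin n) ℝ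
    rw [this]
    exact isClosed_eq (continuous_id.matrix_mul continuous_id.matrix_transpose) continuous_const
  · intro M hM i _ j _
    exact abs_le.1 (entry_norm_bound_of_unitary hM i j)

/-- Ultrafilter limits of a sequence of rigid motions mapping `S` into a bounded ball. If `S` is
empty the translations are unconstrained, and only the orthogonal parts need converge. -/
lemma exists_limit_motion {n : ℕ} (U : Ultrafilter ℕ) (S : Set (EuclideanSpace ℝ (Fin n)))
    (θ : ℕ → Matrix (Fin n) (Fin n) ℝ) (ξ : ℕ → EuclideanSpace ℝ (Fin n)) (B : ℝ)
    (hθ : ∀ k, θ k ∈ Matrix.orthogonalGroup (Fin n) ℝ)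
    (hB : ∀ k, ∀ x ∈ S, ‖rmApply (θ k) (ξ k) x‖ ≤ B) :
    ∃ θ' ξ', θ' ∈ Matrix.orthogonalGroup (Fin n) ℝ ∧ Tendsto θ U (𝓝 θ') ∧
      (S.Nonempty → Tendsto ξ U (𝓝 ξ')) := by
  obtain ⟨θ', hθ', hlim⟩ := (isCompact_orthogonalGroup n).ultrafilter_le_nhds' (U.map θ)
    (Ultrafilter.mem_map.2 (Filter.univ_mem' hθ))
  have hlim' : Tendsto θ U (𝓝 θ') := hlim
  rcases S.eq_empty_or_nonempty with rfl | ⟨a, ha⟩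
  · exact ⟨θ', 0, hθ', hlim', fun h => absurd h Set.not_nonempty_empty⟩
  -- The points `ξ k + θ k a` stay in a ball, and `ξ k` differs from them by `θ k a → θ' a`.
  obtain ⟨p, -, hp⟩ := (isCompact_closedBall (0 : EuclideanSpace ℝ (Fin n)) B).ultrafilter_le_nhds'
    (U.map fun k => rmApply (θ k) (ξ k) a)
    (Ultrafilter.mem_map.2 (Filter.univ_mem' fun k => by simpa using hB k a ha))
  have hp' : Tendsto (fun k => rmApply (θ k) (ξ k) a) U (𝓝 p) := hp
  refine ⟨θ', p - rmApply θ' 0 a, hθ', hlim', fun _ => ?_⟩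
  refine (hp'.sub (tendsto_rmApply (ξ := fun _ => 0) hlim' tendsto_const_nhds
    (tendsto_const_nhds (x := a)))).congr fun k => ?_
  simp [rmApply]

/-- **Theorem 1 (second part).** If for every `ε > 0` there exists a packing of `A` into
some closed ball of radius `R + ε` in `ℝⁿ`, then there exists a packing of `A` into a
closed ball of radius `R`. -/
theorem packing_of_balls {n : ℕ} {ι : Type*} (A : ι → Set (EuclideanSpace ℝ (Fin n)))
    (R : ℝ) (hR : 0 < R)
    (h : ∀ ε : ℝ, 0 < ε → ∃ c : EuclideanSpace ℝ (Fin n),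
      PacksInto A (Metric.closedBall c (R + ε))) :
    ∃ c : EuclideanSpace ℝ (Fin n), PacksInto A (Metric.closedBall c R) := by
  have hε : ∀ k : ℕ, (0 : ℝ) < 1 / ((k : ℝ) + 1) := fun k => by positivity
  choose c θ ξ₀ hO hsub hdisj using fun k : ℕ => h (1 / ((k : ℝ) + 1)) (hε k)
  -- Recentre every packing at the origin.
  let ξ : ℕ → ι → EuclideanSpace ℝ (Fin n) := fun k i => ξ₀ k i - c k
  have hnorm : ∀ k i, ∀ x ∈ A i, ‖rmApply (θ k i) (ξ k i) x‖ ≤ R + 1 / ((k : ℝ) + 1) := by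
    intro k i x hx
    have := hsub k i ⟨x, hx, rfl⟩
    rwa [Metric.mem_closedBall, dist_eq_norm, ← rmApply_sub] at this
  let U : Ultrafilter ℕ := Filter.hyperfilter ℕ
  have hU : (U : Filter ℕ) ≤ atTop := by
    rw [← Nat.cofinite_eq_atTop]; exact Filter.hyperfilter_le_cofinite
  have hlim := fun i => exists_limit_motion U (A i) (fun k => θ k i) (fun k => ξ k i) (R + 1)
    (fun k => hO k i) (fun k x hx => (hnorm k i x hx).trans (by
      have : 1 / ((k : ℝ) + 1) ≤ 1 := by
        rw [div_le_one (by positivity)]; linarith [(Nat.cast_nonneg k : (0 : ℝ) ≤ k)]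
      linarith))
  choose θ' ξ' hO' hθ' hξ' using hlim
  refine ⟨0, θ', ξ', hO', ?_, ?_⟩
  · rintro i _ ⟨x, hx, rfl⟩
    have h1 : Tendsto (fun k => ‖rmApply (θ k i) (ξ k i) x‖) U
        (𝓝 ‖rmApply (θ' i) (ξ' i) x‖) :=
      (tendsto_rmApply (hθ' i) (hξ' i ⟨x, hx⟩) tendsto_const_nhds).norm
    have h2 : Tendsto (fun k : ℕ => R + 1 / ((k : ℝ) + 1)) U (𝓝 (R + 0)) :=
      tendsto_const_nhds.add (tendsto_one_div_add_atTop_nhds_zero_nat.mono_left hU)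
    have := le_of_tendsto_of_tendsto' h1 h2 fun k => hnorm k i x hx
    simpa using this
  · intro i j hij
    rw [Set.eq_empty_iff_forall_notMem]
    rintro p ⟨hpi, hpj⟩
    rw [interior_rmApply_image (hO' i)] at hpi
    rw [interior_rmApply_image (hO' j)] at hpj
    obtain ⟨x, hx, rfl⟩ := hpi
    obtain ⟨y, hy, hyx⟩ := hpj
    have h1 := tendsto_rmApply (hθ' i) (hξ' i ⟨x, interior_subset hx⟩)
      (tendsto_const_nhds (x := x))
    have h2 := tendsto_rmInv (hθ' j) (hξ' j ⟨y, interior_subset hy⟩) h1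
    rw [← hyx, rmInv_rmApply (hO' j)] at h2
    obtain ⟨k, hk⟩ := (h2.eventually (isOpen_interior.mem_nhds hy)).exists
    -- Undo the recentring to contradict disjointness in the `k`-th packing.
    have key : rmApply (θ k i) (ξ₀ k i) x ∈ interior (rmApply (θ k i) (ξ₀ k i) '' A i) ∩
        interior (rmApply (θ k j) (ξ₀ k j) '' A j) := by
      rw [interior_rmApply_image (hO k i), interior_rmApply_image (hO k j)]
      refine ⟨⟨x, hx, rfl⟩, _, hk, ?_⟩
      have := rmApply_rmInv (hO k j) (ξ k j) (rmApply (θ k i) (ξ k i) x)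
      simp only [ξ, rmApply_sub] at this ⊢
      exact sub_left_injective this
    rw [hdisj k hij] at key
    exact key
end
end

section
/- Let 𝒜 = {A_1, A_2, …} be the collection of closed rectangles in ℝ² where A_i has dimensions (1/i) × (1/(i+1)) for i ≥ 1. Suppose that for every ε > 0 the collection 𝒜 admits a translated packing into a square of area 1 + ε. Then there exists a translated packing of 𝒜 into a square of area 1 such that the complement, within that square, of the union of the packed rectangles has Lebesgue measure zero (i.e., 𝒜 parallel-tiles a square of area 1). -/
/-! The proof is a compactness argument. Packings `ξⁿ` into squares of side `sₙ → 1` have all their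
translation vectors in a fixed compact square, so by Tychonoff a subsequence converges in every
coordinate to some `ξ`. Containment in the square is a closed condition. Interiors stay disjoint
because a point in two limit interiors lies in the corresponding two interiors of `ξⁿ` for large `n`
(`interior_disjoint_of_tendsto`). Finally the packed rectangles have pairwise disjoint interiors and
null boundaries, and their areas `1 / ((i+1)(i+2))` telescope to `1`, so the union has full
measure in the unit square. -/

open Pointwise

noncomputable section

/-- `ξ` is a translated packing of the family `A` into the set `C`: each translated set
`ξᵢ + Aᵢ` is contained in `C`, and the translated sets have pairwise disjoint interiors. -/
def IsTransPacking {n : ℕ} {ι : Type*} (A : ι → Set (EuclideanSpace ℝ (Fin n)))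
    (ξ : ι → EuclideanSpace ℝ (Fin n)) (C : Set (EuclideanSpace ℝ (Fin n))) : Prop :=
  (∀ i, (fun x => ξ i + x) '' A i ⊆ C) ∧
  Pairwise fun i j =>
    interior ((fun x => ξ i + x) '' A i) ∩ interior ((fun x => ξ j + x) '' A j) = ∅

/-- There exists a translated packing of `A` into `C`. -/
def TransPacksInto {n : ℕ} {ι : Type*} (A : ι → Set (EuclideanSpace ℝ (Fin n)))
    (C : Set (EuclideanSpace ℝ (Fin n))) : Prop :=
  ∃ ξ, IsTransPacking A ξ C

/-- The closed axis-aligned rectangle `[0, w] × [0, h]` in `ℝ²`. -/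
def rect (w h : ℝ) : Set (EuclideanSpace ℝ (Fin 2)) :=
  {x | x 0 ∈ Set.Icc 0 w ∧ x 1 ∈ Set.Icc 0 h}

/-- The collection of rectangles of dimensions `1 × (1/2)`, `(1/2) × (1/3)`,
`(1/3) × (1/4)`, …: the `i`-th set (for `i : ℕ`) has dimensions `(1/(i+1)) × (1/(i+2))`. -/
def moserRects : ℕ → Set (EuclideanSpace ℝ (Fin 2)) :=
  fun i => rect (1 / ((i : ℝ) + 1)) (1 / ((i : ℝ) + 2))

open MeasureTheory Filter Topology

lemma volume_rect (w h : ℝ) (hw : 0 ≤ w) :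
    volume (rect w h) = ENNReal.ofReal (w * h) := by
  have e : rect w h = (MeasurableEquiv.toLp 2 (Fin 2 → ℝ)).symm ⁻¹' Set.Icc ![0, 0] ![w, h] := by
    ext x
    simp only [rect, Set.mem_ofPred_eq, Set.mem_preimage, Set.mem_Icc, Pi.le_def, Fin.forall_fin_two]
    simp
    tauto
  rw [e, (EuclideanSpace.volume_preserving_symm_measurableEquiv_toLp (Fin 2)).measure_preimage
    measurableSet_Icc.nullMeasurableSet, Real.volume_Icc_pi]
  simp [ENNReal.ofReal_mul hw]

lemma convex_rect (w h : ℝ) : Convex ℝ (rect w h) := by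
  have e : rect w h = (EuclideanSpace.proj (𝕜 := ℝ) (0 : Fin 2)) ⁻¹' Set.Icc 0 w ∩
      (EuclideanSpace.proj (𝕜 := ℝ) (1 : Fin 2)) ⁻¹' Set.Icc 0 h := rfl
  rw [e]
  exact ((convex_Icc 0 w).is_linear_preimage (LinearMap.isLinear (EuclideanSpace.proj _ : _ →L[ℝ] ℝ).toLinearMap)).inter
    ((convex_Icc 0 h).is_linear_preimage (LinearMap.isLinear (EuclideanSpace.proj _ : _ →L[ℝ] ℝ).toLinearMap))

lemma isCompact_rect (w h : ℝ) : IsCompact (rect w h) := by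
  have e : rect w h = (EuclideanSpace.equiv (Fin 2) ℝ).toHomeomorph ⁻¹'
      Set.Icc ![0, 0] ![w, h] := by
    ext x
    simp only [rect, Set.mem_ofPred_eq, Set.mem_preimage, Set.mem_Icc, Pi.le_def, Fin.forall_fin_two]
    simp
    tauto
  rw [e, Homeomorph.isCompact_preimage]
  exact isCompact_Icc

lemma mem_interior_translate {n : ℕ} (A : Set (EuclideanSpace ℝ (Fin n)))
    (v p : EuclideanSpace ℝ (Fin n)) :
    p ∈ interior ((fun x => v + x) '' A) ↔ p - v ∈ interior A := by
  have := (Homeomorph.addLeft v).image_interior A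
  simp only [Homeomorph.coe_addLeft] at this
  rw [← this]
  constructor
  · rintro ⟨x, hx, rfl⟩
    simpa using hx
  · intro hp
    exact ⟨_, hp, by simp⟩

/-- Disjointness of interiors of translates passes to limits of the translation vectors. -/
lemma interior_disjoint_of_tendsto {n : ℕ} {A B : Set (EuclideanSpace ℝ (Fin n))}
    {u v : ℕ → EuclideanSpace ℝ (Fin n)} {a b : EuclideanSpace ℝ (Fin n)}
    (hu : Tendsto u atTop (𝓝 a)) (hv : Tendsto v atTop (𝓝 b))
    (h : ∀ k, interior ((fun x => u k + x) '' A) ∩ interior ((fun x => v k + x) '' B) = ∅) :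
    interior ((fun x => a + x) '' A) ∩ interior ((fun x => b + x) '' B) = ∅ := by
  rw [Set.eq_empty_iff_forall_notMem]
  rintro p ⟨hp, hq⟩
  rw [mem_interior_translate] at hp hq
  have h1 := (hu.const_sub p).eventually (isOpen_interior.mem_nhds hp)
  have h2 := (hv.const_sub p).eventually (isOpen_interior.mem_nhds hq)
  obtain ⟨k, hk1, hk2⟩ := (h1.and h2).exists
  have : p ∈ interior ((fun x => u k + x) '' A) ∩ interior ((fun x => v k + x) '' B) :=
    ⟨(mem_interior_translate _ _ _).2 hk1, (mem_interior_translate _ _ _).2 hk2⟩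
  rw [h k] at this
  exact this

lemma hasSum_moser_areas :
    HasSum (fun i : ℕ => 1 / ((i : ℝ) + 1) * (1 / ((i : ℝ) + 2))) 1 := by
  rw [hasSum_iff_tendsto_nat_of_nonneg (fun i => by positivity)]
  have hs : ∀ n : ℕ, ∑ i ∈ Finset.range n, 1 / ((i : ℝ) + 1) * (1 / ((i : ℝ) + 2))
      = 1 - 1 / ((n : ℝ) + 1) := by
    intro n
    induction n with
    | zero => simp
    | succ n ih =>
      rw [Finset.sum_range_succ, ih]
      push_cast
      field_simp
      ring
  simp only [hs]
  simpa using (tendsto_one_div_add_atTop_nhds_zero_nat (𝕜 := ℝ)).const_sub 1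

lemma volume_interior_translate_moser (i : ℕ) (v : EuclideanSpace ℝ (Fin 2)) :
    volume (interior ((fun x => v + x) '' moserRects i)) =
      ENNReal.ofReal (1 / ((i : ℝ) + 1) * (1 / ((i : ℝ) + 2))) := by
  have hc : Convex ℝ ((fun x => v + x) '' moserRects i) := (convex_rect _ _).translate v
  -- Convex sets have null frontier.
  rw [measure_congr (interior_ae_eq_of_null_frontier (hc.addHaar_frontier volume)),
    Set.image_add_left, measure_preimage_add]
  exact volume_rect _ _ (by positivity)

/-- A packing of the rectangles into the unit square covers almost all of it. -/
lemma volume_compl_of_packing {ξ : ℕ → EuclideanSpace ℝ (Fin 2)}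
    (hξ : IsTransPacking moserRects ξ (rect 1 1)) :
    volume (rect 1 1 \ ⋃ i, (fun x => ξ i + x) '' moserRects i) = 0 := by
  set U := ⋃ i, interior ((fun x => ξ i + x) '' moserRects i) with hU
  have hsub : U ⊆ ⋃ i, (fun x => ξ i + x) '' moserRects i :=
    Set.iUnion_mono fun i => interior_subset
  have hUm : MeasurableSet U := MeasurableSet.iUnion fun i => isOpen_interior.measurableSet
  have hvU : volume U = 1 := by
    rw [hU, measure_iUnion (fun i j hij => Set.disjoint_iff_inter_eq_empty.2 (hξ.2 hij))
      (fun i => isOpen_interior.measurableSet)]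
    simp only [volume_interior_translate_moser]
    rw [← ENNReal.ofReal_tsum_of_nonneg (fun i => by positivity) hasSum_moser_areas.summable,
      hasSum_moser_areas.tsum_eq, ENNReal.ofReal_one]
  refine measure_mono_null (Set.sdiff_subset_sdiff_right hsub) ?_
  rw [measure_sdiff (hsub.trans (Set.iUnion_subset hξ.1)) hUm.nullMeasurableSet (by simp [hvU]), hvU,
    volume_rect _ _ zero_le_one]
  simp

/-- **Corollary 1, parallel version.** If for every `ε > 0` the rectangles of dimensions
`1 × (1/2)`, `(1/2) × (1/3)`, … admit a translated packing into a square of area `1 + ε`,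
then they parallel-tile a square of area `1`: there is a translated packing into the unit
square whose complement in that square has Lebesgue measure zero. -/
theorem moser_rectangles_parallel_tile_square
    (h : ∀ ε : ℝ, 0 < ε → ∃ s : ℝ, 0 ≤ s ∧ s ^ 2 = 1 + ε ∧
      TransPacksInto moserRects (rect s s)) :
    ∃ ξ : ℕ → EuclideanSpace ℝ (Fin 2),
      IsTransPacking moserRects ξ (rect 1 1) ∧
      MeasureTheory.volume
        (rect 1 1 \ ⋃ i, (fun x => ξ i + x) '' moserRects i) = 0 := by
  have h' : ∀ n : ℕ, ∃ (s : ℝ) (ξ : ℕ → EuclideanSpace ℝ (Fin 2)),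
      s ≤ 1 + 1 / ((n : ℝ) + 1) ∧ IsTransPacking moserRects ξ (rect s s) := by
    intro n
    have hε : 0 < 1 / ((n : ℝ) + 1) := by positivity
    obtain ⟨s, hs0, hs, ξ, hξ⟩ := h _ hε
    exact ⟨s, ξ, by nlinarith, hξ⟩
  choose s ξ hs hξ using h'
  have hmem : ∀ n i, ∀ x ∈ moserRects i, ξ n i + x ∈ rect (s n) (s n) :=
    fun n i x hx => (hξ n).1 i ⟨x, hx, rfl⟩
  have hK : ∀ n, ξ n ∈ Set.univ.pi fun _ : ℕ => rect 2 2 := by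
    intro n i _
    have h0 : (0 : EuclideanSpace ℝ (Fin 2)) ∈ moserRects i := by
      simp only [moserRects, rect, Set.mem_ofPred_eq, Set.mem_Icc, PiLp.zero_apply, le_refl,
        true_and]
      constructor <;> positivity
    have h1 := hmem n i 0 h0
    have hle : 1 / ((n : ℝ) + 1) ≤ 1 := by
      rw [div_le_one (by positivity)]
      linarith [n.cast_nonneg (α := ℝ)]
    have h2 := hs n
    rw [add_zero] at h1
    obtain ⟨⟨a, b⟩, c, d⟩ := h1
    exact ⟨⟨a, by linarith⟩, c, by linarith⟩
  obtain ⟨ζ, -, φ, hφ, hlim⟩ :=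
    (isCompact_univ_pi fun _ : ℕ => isCompact_rect 2 2).tendsto_subseq hK
  rw [tendsto_pi_nhds] at hlim
  have hζ : IsTransPacking moserRects ζ (rect 1 1) := by
    refine ⟨?_, fun i j hij => interior_disjoint_of_tendsto (hlim i) (hlim j)
      fun k => (hξ (φ k)).2 hij⟩
    rintro i _ ⟨x, hx, rfl⟩
    have hb : Tendsto (fun k => 1 + 1 / ((φ k : ℝ) + 1)) atTop (𝓝 1) := by
      simpa using ((tendsto_one_div_add_atTop_nhds_zero_nat (𝕜 := ℝ)).comp
        hφ.tendsto_atTop).const_add 1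
    have hc : ∀ m : Fin 2, Tendsto (fun k => (ξ (φ k) i + x) m) atTop (𝓝 ((ζ i + x) m)) :=
      fun m => ((EuclideanSpace.proj (𝕜 := ℝ) m).continuous.tendsto _).comp
        ((hlim i).add_const x)
    have hm := fun k => hmem (φ k) i x hx
    exact ⟨⟨ge_of_tendsto' (hc 0) fun k => (hm k).1.1,
        le_of_tendsto_of_tendsto' (hc 0) hb fun k => (hm k).1.2.trans (hs _)⟩,
      ge_of_tendsto' (hc 1) fun k => (hm k).2.1,
      le_of_tendsto_of_tendsto' (hc 1) hb fun k => (hm k).2.2.trans (hs _)⟩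
  exact ⟨ζ, hζ, volume_compl_of_packing hζ⟩
end
end

section
/- Let C be a closed subset of ℝⁿ and let 𝒜 = {A_1, A_2, …} be a countable collection of subsets of ℝⁿ. Then the set 𝒫(𝒜,C) of all packings of 𝒜 into C, regarded as the set of sequences S = (σ_i)_{i≥1} ∈ (O(n) × ℝⁿ)^ℕ satisfying σ_i(A_i) ⊆ C for all i and Int(σ_i(A_i)) ∩ Int(σ_j(A_j)) = ∅ for all i ≠ j, is a closed subset of the product space (O(n) × ℝⁿ)^ℕ (with the product topology, where O(n) × ℝⁿ carries its standard topology). -/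
/-!
Both conditions defining a packing are intersections of closed conditions, indexed by points.
Containment `σᵢ(Aᵢ) ⊆ C` says `σᵢ(x) ∈ C` for every `x ∈ Aᵢ`, and `σ ↦ σᵢ(x)` is continuous.
Since a rigid motion is a homeomorphism, `y ∈ Int(σᵢ(Aᵢ))` means `σᵢ⁻¹(y) ∈ Int(Aᵢ)`, which is
an open condition on `σ` because `σᵢ⁻¹(y) = θᵢᵀ(y - ξᵢ)` is continuous in `σᵢ`
(`mem_interior_image_rmApply`, `continuous_rmHomeo_symm_apply`). Hence overlap of two interiors
at some point `y` is open, and disjointness of the interiors is closed.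
-/

noncomputable section

/-- The rigid motion of `ℝⁿ` given by `(θ, ξ)`, as a self-homeomorphism; its inverse is
`y ↦ θᵀ(y - ξ)`. -/
def rmHomeo {n : ℕ} (σ : Matrix.orthogonalGroup (Fin n) ℝ × EuclideanSpace ℝ (Fin n)) :
    EuclideanSpace ℝ (Fin n) ≃ₜ EuclideanSpace ℝ (Fin n) where
  toFun := rmApply (σ.1 : Matrix (Fin n) (Fin n) ℝ) σ.2
  invFun y := rmApply (star (σ.1 : Matrix (Fin n) (Fin n) ℝ)) 0 (y - σ.2)
  left_inv x := by
    simp only [rmApply, add_sub_cancel_left, zero_add, ContinuousLinearEquiv.apply_symm_apply,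
      Matrix.mulVec_mulVec, Matrix.UnitaryGroup.star_mul_self, Matrix.one_mulVec,
      ContinuousLinearEquiv.symm_apply_apply]
  right_inv y := by
    have h : (σ.1 : Matrix (Fin n) (Fin n) ℝ) * star (σ.1 : Matrix (Fin n) (Fin n) ℝ) = 1 :=
      Matrix.mem_unitaryGroup_iff.1 σ.1.2
    simp only [rmApply, zero_add, ContinuousLinearEquiv.apply_symm_apply,
      Matrix.mulVec_mulVec, h, Matrix.one_mulVec, ContinuousLinearEquiv.symm_apply_apply,
      add_sub_cancel]
  continuous_toFun := by
    unfold rmApply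
    fun_prop
  continuous_invFun := by
    unfold rmApply
    fun_prop

lemma continuous_rmHomeo_apply {n : ℕ} (x : EuclideanSpace ℝ (Fin n)) :
    Continuous fun σ : Matrix.orthogonalGroup (Fin n) ℝ × EuclideanSpace ℝ (Fin n) =>
      rmHomeo σ x := by
  change Continuous fun σ : Matrix.orthogonalGroup (Fin n) ℝ × EuclideanSpace ℝ (Fin n) =>
    rmApply (σ.1 : Matrix (Fin n) (Fin n) ℝ) σ.2 x
  unfold rmApply
  fun_prop

lemma continuous_rmHomeo_symm_apply {n : ℕ} (y : EuclideanSpace ℝ (Fin n)) :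
    Continuous fun σ : Matrix.orthogonalGroup (Fin n) ℝ × EuclideanSpace ℝ (Fin n) =>
      (rmHomeo σ).symm y := by
  change Continuous fun σ : Matrix.orthogonalGroup (Fin n) ℝ × EuclideanSpace ℝ (Fin n) =>
    rmApply (star (σ.1 : Matrix (Fin n) (Fin n) ℝ)) 0 (y - σ.2)
  unfold rmApply
  fun_prop

lemma mem_interior_image_rmApply {n : ℕ}
    (σ : Matrix.orthogonalGroup (Fin n) ℝ × EuclideanSpace ℝ (Fin n))
    (A : Set (EuclideanSpace ℝ (Fin n))) (y : EuclideanSpace ℝ (Fin n)) :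
    y ∈ interior (rmApply (σ.1 : Matrix (Fin n) (Fin n) ℝ) σ.2 '' A) ↔
      (rmHomeo σ).symm y ∈ interior A := by
  change y ∈ interior (rmHomeo σ '' A) ↔ _
  rw [← Homeomorph.image_interior, Homeomorph.image_eq_preimage_symm, Set.mem_preimage]

/-- **Proposition 1.** For a closed set `C ⊆ ℝⁿ` and a countable collection
`A = {A_1, A_2, …}` of subsets of `ℝⁿ`, the set `𝒫(A, C)` of packings of `A` into `C` —
the sequences `σ = (θᵢ, ξᵢ)ᵢ ∈ (O(n) × ℝⁿ)^ℕ` with each `σᵢ(Aᵢ) ⊆ C` and the interiors of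
the `σᵢ(Aᵢ)` pairwise disjoint — is a closed subset of the product space
`(O(n) × ℝⁿ)^ℕ`. -/
theorem packings_isClosed {n : ℕ} (C : Set (EuclideanSpace ℝ (Fin n))) (hC : IsClosed C)
    (A : ℕ → Set (EuclideanSpace ℝ (Fin n))) :
    IsClosed {σ : ℕ → (Matrix.orthogonalGroup (Fin n) ℝ) × EuclideanSpace ℝ (Fin n) |
      (∀ i, rmApply ((σ i).1 : Matrix (Fin n) (Fin n) ℝ) (σ i).2 '' A i ⊆ C) ∧
      Pairwise fun i j =>
        interior (rmApply ((σ i).1 : Matrix (Fin n) (Fin n) ℝ) (σ i).2 '' A i) ∩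
          interior (rmApply ((σ j).1 : Matrix (Fin n) (Fin n) ℝ) (σ j).2 '' A j) = ∅} := by
  have hset : ∀ σ : ℕ → (Matrix.orthogonalGroup (Fin n) ℝ) × EuclideanSpace ℝ (Fin n),
      ((∀ i, rmApply ((σ i).1 : Matrix (Fin n) (Fin n) ℝ) (σ i).2 '' A i ⊆ C) ∧
      Pairwise fun i j =>
        interior (rmApply ((σ i).1 : Matrix (Fin n) (Fin n) ℝ) (σ i).2 '' A i) ∩
          interior (rmApply ((σ j).1 : Matrix (Fin n) (Fin n) ℝ) (σ j).2 '' A j) = ∅) ↔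
      (∀ i, ∀ x ∈ A i, rmHomeo (σ i) x ∈ C) ∧
      ∀ i j, i ≠ j → ∀ y, ¬ ((rmHomeo (σ i)).symm y ∈ interior (A i) ∧
        (rmHomeo (σ j)).symm y ∈ interior (A j)) := by
    intro σ
    refine and_congr (forall_congr' fun i => Set.image_subset_iff) ?_
    refine forall_congr' fun i => forall_congr' fun j => forall_congr' fun _ => ?_
    simp only [Set.eq_empty_iff_forall_notMem, Set.mem_inter_iff, mem_interior_image_rmApply]
  simp only [hset, Set.ofPred_and, Set.ofPred_forall]
  refine IsClosed.inter ?_ ?_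
  · refine isClosed_iInter fun i => isClosed_iInter fun x => isClosed_iInter fun _ => ?_
    exact hC.preimage ((continuous_rmHomeo_apply x).comp (continuous_apply i))
  · refine isClosed_iInter fun i => isClosed_iInter fun j => isClosed_iInter fun _ =>
      isClosed_iInter fun y => ?_
    have hopen : ∀ k, IsOpen {σ : ℕ → (Matrix.orthogonalGroup (Fin n) ℝ) ×
        EuclideanSpace ℝ (Fin n) | (rmHomeo (σ k)).symm y ∈ interior (A k)} := fun k =>
      isOpen_interior.preimage ((continuous_rmHomeo_symm_apply y).comp (continuous_apply k))
    exact ((hopen i).inter (hopen j)).isClosed_compl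
end
end
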